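/- Classical Euler-type transformation: for complex parameters with Re(c_j) > Re(b_j) > 0 and x_k ≠ 1 with appropriate convergence, F_A^{(n)}[a; b_1,…,b_n; c_1,…,c_n | x_1,…,x_n] = (1-x_k)^{-a} F_A^{(n)}[a; b_1,…,c_k−b_k,…,b_n; c_1,…,c_n | x_1/(1-x_k),…,−x_k/(1-x_k),…,x_n/(1-x_k)], where the k-th numerator parameter b_k is replaced by c_k − b_k and the k-th argument by −x_k/(1-x_k). -/

import Mathlib

open Finset

/-- Rising factorial (Pochhammer symbol) `(a)_m = a(a+1)⋯(a+m-1)` on `ℂ`. -/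
noncomputable def rising (a : ℂ) (m : ℕ) : ℂ := ∏ j ∈ Finset.range m, (a + j)

/-- The classical Lauricella series `F_A` with parameters indexed by `ι`. -/
noncomputable def lauA {ι : Type} [Fintype ι] [DecidableEq ι] (a : ℂ) (b c x : ι → ℂ) : ℂ :=
  ∑' m : ι → ℕ,
    rising a (∑ i, m i) * (∏ i, rising (b i) (m i) / rising (c i) (m i))
      * ∏ i, x i ^ (m i) / (Nat.factorial (m i) : ℂ)

/-!
Summing first over the index `m_k`, the series `F_A` becomes a combination of the Gauss functions
`₂F₁(a + |m|, b_k; c_k; x_k)`, where `m` runs over the remaining indices, so the transformation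
follows term by term from Pfaff's transformation
`₂F₁(a, b; c; x) = (1 - x)^(-a) ₂F₁(a, c - b; c; -x / (1 - x))`.

For `‖x‖ < 1 / 2`, both sides of Pfaff's transformation are the sum of the double series
`∑ (a)_{i+j} (c - b)_i / (c)_i · (-x)^i / i! · x^j / j!`: summing over `j` first gives the right
side by the binomial series, and summing along `i + j = n` gives the left side by the
Chu–Vandermonde identity. The identity theorem extends the equality to the convex domain `‖x‖ < 1`,
`re x < 1 / 2`, on which both sides are holomorphic.
-/

section Rising

lemma rising_eq_ascPochhammer_eval (a : ℂ) (m : ℕ) : rising a m = (ascPochhammer ℂ m).eval a := by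
  induction m with
  | zero => simp [rising]
  | succ m ih => rw [ascPochhammer_succ_eval, ← ih, rising, rising, Finset.prod_range_succ]

lemma rising_add (a : ℂ) (i j : ℕ) : rising a (i + j) = rising a i * rising (a + i) j := by
  simp only [rising, Finset.prod_range_add, Nat.cast_add, add_assoc]

lemma rising_one (m : ℕ) : rising 1 m = (m.factorial : ℂ) := by
  rw [rising_eq_ascPochhammer_eval, ascPochhammer_eval_one]

lemma ne_neg_natCast_of_re_pos {c : ℂ} (hc : 0 < c.re) (m : ℕ) : c ≠ -m := by
  rintro rfl
  simp only [Complex.neg_re, Complex.natCast_re, Left.neg_pos_iff] at hc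
  exact hc.not_ge m.cast_nonneg

lemma rising_ne_zero {c : ℂ} (hc : ∀ m : ℕ, c ≠ -m) (m : ℕ) : rising c m ≠ 0 :=
  Finset.prod_ne_zero_iff.2 fun j _ h => hc j (eq_neg_of_add_eq_zero_left h)

lemma rising_eq_factorial_mul_multichoose (a : ℂ) (m : ℕ) :
    rising a m = m.factorial * Ring.multichoose a m := by
  rw [← nsmul_eq_mul, Ring.factorial_nsmul_multichoose_eq_ascPochhammer,
    rising_eq_ascPochhammer_eval, ← Polynomial.ascPochhammer_smeval_eq_eval]

lemma multichoose_eq_sum_antidiagonal {R : Type*} [CommRing R] [BinomialRing R] (b c : R) (n : ℕ) :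
    Ring.multichoose b n = ∑ p ∈ antidiagonal n,
      (-1) ^ p.1 * Ring.multichoose (c - b) p.1 * Ring.multichoose (c + p.1) p.2 := by
  -- The Chu–Vandermonde identity for the upper arguments `-(c - b)` and `c + n - 1`.
  rw [Ring.multichoose_eq, show b + n - 1 = -(c - b) + (c + n - 1) by ring,
    Ring.add_choose_eq n (Commute.all _ _)]
  refine Finset.sum_congr rfl fun p hp => ?_
  rw [Ring.choose_neg', Ring.multichoose_eq (c + p.1), ← mem_antidiagonal.1 hp]
  congr 1
  · simp [Int.negOnePow_def, Units.smul_def]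
  · push_cast
    ring_nf

lemma rising_div_rising_eq_sum_antidiagonal (b : ℂ) {c : ℂ} (hc : ∀ m : ℕ, c ≠ -m) (n : ℕ) :
    rising b n / rising c n / n.factorial = ∑ p ∈ antidiagonal n,
      (-1) ^ p.1 * (rising (c - b) p.1 / rising c p.1) / (p.1.factorial * p.2.factorial) := by
  have h_fact (m : ℕ) : (m.factorial : ℂ) ≠ 0 := Nat.cast_ne_zero.2 m.factorial_ne_zero
  calc rising b n / rising c n / n.factorial
      = Ring.multichoose b n / rising c n := by
        rw [rising_eq_factorial_mul_multichoose b]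
        field_simp [h_fact n]
    _ = ∑ p ∈ antidiagonal n, (-1) ^ p.1 * Ring.multichoose (c - b) p.1
          * Ring.multichoose (c + p.1) p.2 / rising c n := by
        rw [multichoose_eq_sum_antidiagonal b c, Finset.sum_div]
    _ = _ := by
        refine Finset.sum_congr rfl fun p hp => ?_
        have hcp := rising_ne_zero hc (p.1 + p.2)
        rw [rising_add] at hcp
        rw [← mem_antidiagonal.1 hp, rising_add, rising_eq_factorial_mul_multichoose (c - b),
          div_eq_div_iff hcp (mul_ne_zero (h_fact _) (h_fact _)),
          rising_eq_factorial_mul_multichoose (c + p.1)]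
        field_simp [h_fact p.1, left_ne_zero_of_mul hcp]

end Rising

section Summability

lemma tsum_prod_eq_tsum_sum_antidiagonal {A E : Type*} [AddCommMonoid A] [HasAntidiagonal A]
    [AddCommGroup E] [UniformSpace E] [IsUniformAddGroup E] [CompleteSpace E] [T2Space E]
    {f : A × A → E} (hf : Summable f) : ∑' p, f p = ∑' n, ∑ p ∈ antidiagonal n, f p := by
  rw [← HasAntidiagonal.sigmaAntidiagonalEquivProd.tsum_eq]
  rw [← HasAntidiagonal.sigmaAntidiagonalEquivProd.summable_iff] at hf
  exact hf.tsum_sigma.trans (tsum_congr fun n => Finset.tsum_subtype (antidiagonal n) f)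

lemma one_le_radius_ordinaryHypergeometricSeries {𝕂 : Type*} (𝔸 : Type*) [RCLike 𝕂]
    [NormedDivisionRing 𝔸] [NormedAlgebra 𝕂 𝔸] (a b c : 𝕂) :
    1 ≤ (ordinaryHypergeometricSeries 𝔸 a b c).radius := by
  by_cases! h : ∀ m : ℕ, (m : 𝕂) ≠ -a ∧ (m : 𝕂) ≠ -b ∧ (m : 𝕂) ≠ -c
  · exact (ordinaryHypergeometricSeries_radius_eq_one 𝔸 a b c h).ge
  · obtain ⟨m, hm⟩ := h
    have h_top : (ordinaryHypergeometricSeries 𝔸 a b c).radius = ⊤ := by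
      refine FormalMultilinearSeries.radius_eq_top_of_forall_image_add_eq_zero _ (1 + m) fun n => ?_
      exact ordinaryHypergeometricSeries_eq_zero_of_neg_nat a b c (k := m) (by tauto) (by lia)
    simp [h_top]

-- The quotients are the coefficients of `₂F₁ b 1 c`, whose radius of convergence is at least `1`.
lemma exists_norm_rising_div_rising_le (b c : ℂ) {r : ℝ} (hr : 1 < r) :
    ∃ C : ℝ, ∀ m, ‖rising b m / rising c m‖ ≤ C * r ^ m := by
  have hr0 : 0 < r := one_pos.trans hr
  have h_radius : ((r⁻¹).toNNReal : ENNReal) < (ordinaryHypergeometricSeries ℂ b 1 c).radius :=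
    lt_of_lt_of_le (by simpa using inv_lt_one_of_one_lt₀ hr)
      (one_le_radius_ordinaryHypergeometricSeries ℂ b 1 c)
  obtain ⟨C, -, hC⟩ := FormalMultilinearSeries.norm_mul_pow_le_of_lt_radius _ h_radius
  refine ⟨C, fun m => ?_⟩
  have h_coeff : ordinaryHypergeometricCoefficient b 1 c m = rising b m / rising c m := by
    have : (m.factorial : ℂ) ≠ 0 := Nat.cast_ne_zero.2 m.factorial_ne_zero
    rw [ordinaryHypergeometricCoefficient, ascPochhammer_eval_one,
      ← rising_eq_ascPochhammer_eval, ← rising_eq_ascPochhammer_eval]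
    field_simp
  have h_bound := hC m
  rw [ordinaryHypergeometricSeries, FormalMultilinearSeries.ofScalars_norm, h_coeff,
    Real.coe_toNNReal _ (inv_nonneg.2 hr0.le), inv_pow, ← div_eq_mul_inv,
    div_le_iff₀ (pow_pos hr0 m)] at h_bound
  exact h_bound

variable {ι : Type*} [Fintype ι]

lemma summable_multinomial_mul_prod_pow {y : ι → ℝ} (hy : ∀ i, 0 ≤ y i) (h : ∑ i, y i < 1) :
    Summable fun m : ι → ℕ => (Nat.multinomial Finset.univ m : ℝ) * ∏ i, y i ^ m i := by
  classical
  have h_fiber (N : ℕ) : HasSum (fun m : {m : ι → ℕ // ∑ i, m i = N} =>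
      (Nat.multinomial Finset.univ m.1 : ℝ) * ∏ i, y i ^ m.1 i) ((∑ i, y i) ^ N) := by
    rw [Finset.sum_pow_eq_sum_piAntidiag]
    exact (Equiv.subtypeEquivRight fun m => by simp).hasSum_iff.1
      (Finset.hasSum (Finset.piAntidiag Finset.univ N) _)
  rw [← (Equiv.sigmaFiberEquiv fun m : ι → ℕ => ∑ i, m i).summable_iff, summable_sigma_of_nonneg]
  · refine ⟨fun N => (h_fiber N).summable, ?_⟩
    exact (summable_geometric_of_lt_one (Finset.sum_nonneg fun i _ => hy i) h).congr
      fun N => (h_fiber N).tsum_eq.symm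
  · exact fun m =>
      mul_nonneg (Nat.cast_nonneg _) (Finset.prod_nonneg fun i _ => pow_nonneg (hy i) _)

/-- The term of index `m` of the series defining `lauA a b c x`. -/
noncomputable def lauATerm (a : ℂ) (b c x : ι → ℂ) (m : ι → ℕ) : ℂ :=
  rising a (∑ i, m i) * (∏ i, rising (b i) (m i) / rising (c i) (m i))
    * ∏ i, x i ^ (m i) / (Nat.factorial (m i) : ℂ)

lemma lauATerm_eq_multinomial_mul_prod (a : ℂ) (b c x : ι → ℂ) (m : ι → ℕ) :
    lauATerm a b c x m = rising a (∑ i, m i) / rising 1 (∑ i, m i) *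
      (Nat.multinomial Finset.univ m *
        ∏ i, rising (b i) (m i) / rising (c i) (m i) * x i ^ m i) := by
  have h_spec : (∏ i, ((m i).factorial : ℂ)) * Nat.multinomial Finset.univ m =
      (∑ i, m i).factorial := mod_cast Nat.multinomial_spec Finset.univ m
  have h_sum : ((∑ i, m i).factorial : ℂ) ≠ 0 := Nat.cast_ne_zero.2 (Nat.factorial_ne_zero _)
  have h_prod : (∏ i, ((m i).factorial : ℂ)) ≠ 0 := by
    rw [← h_spec] at h_sum
    exact left_ne_zero_of_mul h_sum
  rw [lauATerm, rising_one, Finset.prod_mul_distrib, div_mul_eq_mul_div, eq_div_iff h_sum, ← h_spec,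
    Finset.prod_div_distrib (f := fun i => x i ^ m i)]
  field_simp

lemma lauATerm_div (a : ℂ) (b c x : ι → ℂ) (y : ℂ) (m : ι → ℕ) :
    lauATerm a b c (fun i => x i / y) m = lauATerm a b c x m / y ^ ∑ i, m i := by
  simp only [lauATerm, div_pow, Finset.prod_div_distrib, Finset.prod_pow_eq_pow_sum]
  ring

lemma summable_lauATerm (a : ℂ) (b c : ι → ℂ) {x : ι → ℂ} (hx : ∑ i, ‖x i‖ < 1) :
    Summable (lauATerm a b c x) := by
  obtain ⟨r, hrx, hr⟩ : ∃ r : ℝ, r * r * ∑ i, ‖x i‖ < 1 ∧ 1 < r := by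
    have h_cont : Continuous fun r : ℝ => r * r * ∑ i, ‖x i‖ := by fun_prop
    have h_near := (h_cont.tendsto 1).eventually_lt_const (u := 1) (by simpa using hx)
    exact ((h_near.filter_mono nhdsWithin_le_nhds).and
      (self_mem_nhdsWithin (s := Set.Ioi (1 : ℝ)))).exists
  have : 0 < r := one_pos.trans hr
  obtain ⟨A, hA⟩ := exists_norm_rising_div_rising_le a 1 hr
  choose C hC using fun i => exists_norm_rising_div_rising_le (b i) (c i) hr
  have h_majorant := (summable_multinomial_mul_prod_pow (y := fun i => r * r * ‖x i‖)
    (fun i => by positivity) (by rwa [← Finset.mul_sum])).mul_left (A * ∏ i, C i)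
  refine Summable.of_norm_bounded h_majorant fun m => ?_
  rw [lauATerm_eq_multinomial_mul_prod]
  simp only [norm_mul, norm_prod, norm_pow, Complex.norm_natCast]
  calc _ ≤ A * r ^ (∑ i, m i) *
        (Nat.multinomial Finset.univ m * ∏ i, C i * r ^ m i * ‖x i‖ ^ m i) := by
        gcongr with i
        · exact (norm_nonneg _).trans (hA _)
        · exact hA _
        · exact hC i _
    _ = _ := by
        simp only [Finset.prod_mul_distrib, mul_pow, Finset.prod_pow_eq_pow_sum]
        ring

lemma summable_rising_add_mul (a b c : ℂ) {x y : ℂ} (hxy : ‖x‖ + ‖y‖ < 1) :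
    Summable fun p : ℕ × ℕ => rising a (p.1 + p.2) * (rising b p.1 / rising c p.1) *
      (x ^ p.1 / p.1.factorial * (y ^ p.2 / p.2.factorial)) := by
  have h := summable_lauATerm a ![b, 1] ![c, 1] (x := ![x, y]) (by simpa using hxy)
  rw [← (finTwoArrowEquiv ℕ).symm.summable_iff] at h
  refine h.congr fun p => ?_
  have h_one : rising 1 p.2 / rising 1 p.2 = 1 :=
    div_self (by simp [rising_one, Nat.factorial_ne_zero])
  simp only [Function.comp_apply, lauATerm, finTwoArrowEquiv_symm_apply, Fin.sum_univ_two,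
    Fin.prod_univ_two, Matrix.cons_val_zero, Matrix.cons_val_one, h_one, mul_one]

end Summability

section Pfaff

lemma hasSum_ordinaryHypergeometric (a b c : ℂ) {x : ℂ} (hx : ‖x‖ < 1) :
    HasSum (fun m : ℕ => rising a m * (rising b m / rising c m) * (x ^ m / m.factorial))
      (₂F₁ a b c x) := by
  have h := (ordinaryHypergeometricSeries ℂ a b c).hasSum (x := x)
    (Metric.eball_subset_eball (one_le_radius_ordinaryHypergeometricSeries ℂ a b c)
      (by rw [← ENNReal.ofReal_one, Metric.eball_ofReal]; simpa using hx))
  refine h.congr_fun fun m => ?_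
  simp only [ordinaryHypergeometricSeries_apply_eq, rising_eq_ascPochhammer_eval, smul_eq_mul]
  ring

lemma differentiableOn_ordinaryHypergeometric (a b c : ℂ) :
    DifferentiableOn ℂ (₂F₁ a b c : ℂ → ℂ) (Metric.ball 0 1) := by
  have h_radius := one_le_radius_ordinaryHypergeometricSeries ℂ a b c
  have h_series := (ordinaryHypergeometricSeries ℂ a b c).hasFPowerSeriesOnBall
    (one_pos.trans_le h_radius)
  refine h_series.differentiableOn.mono ?_
  rw [← Metric.eball_ofReal, ENNReal.ofReal_one]
  exact Metric.eball_subset_eball h_radius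

lemma hasSum_rising_mul_pow_div_factorial (a : ℂ) {x : ℂ} (hx : ‖x‖ < 1) :
    HasSum (fun m : ℕ => rising a m * (x ^ m / m.factorial)) ((1 - x) ^ (-a)) := by
  have h := (Complex.one_div_one_sub_cpow_hasFPowerSeriesOnBall_zero a).hasSum (y := x)
    (by rw [← ENNReal.ofReal_one, Metric.eball_ofReal]; simpa using hx)
  rw [zero_add, one_div, ← Complex.cpow_neg] at h
  refine h.congr_fun fun m => ?_
  have h_fact : (m.factorial : ℂ) ≠ 0 := Nat.cast_ne_zero.2 m.factorial_ne_zero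
  rw [FormalMultilinearSeries.ofScalars_apply_eq, ← Ring.multichoose_eq, smul_eq_mul,
    rising_eq_factorial_mul_multichoose]
  field_simp

lemma tsum_rising_add_mul (a b c : ℂ) {x y : ℂ} (hxy : ‖x‖ + ‖y‖ < 1) :
    ∑' p : ℕ × ℕ, rising a (p.1 + p.2) * (rising b p.1 / rising c p.1) *
      (x ^ p.1 / p.1.factorial * (y ^ p.2 / p.2.factorial)) =
    (1 - y) ^ (-a) * ₂F₁ a b c (x / (1 - y)) := by
  have hy : ‖y‖ < 1 := by linarith [norm_nonneg x]
  have hy_ne : 1 - y ≠ 0 := sub_ne_zero.2 fun h => by simp [← h] at hy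
  have hxy' : ‖x / (1 - y)‖ < 1 := by
    have h_lower : 1 - ‖y‖ ≤ ‖1 - y‖ := by simpa using norm_sub_norm_le 1 y
    rw [norm_div, div_lt_one (norm_pos_iff.2 hy_ne)]
    linarith
  rw [(summable_rising_add_mul a b c hxy).tsum_prod,
    ← (hasSum_ordinaryHypergeometric a b c hxy').tsum_eq, ← tsum_mul_left]
  refine tsum_congr fun i => ?_
  calc ∑' j : ℕ, rising a (i + j) * (rising b i / rising c i) *
        (x ^ i / i.factorial * (y ^ j / j.factorial))
      = ∑' j : ℕ, rising a i * (rising b i / rising c i) * (x ^ i / i.factorial) *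
          (rising (a + i) j * (y ^ j / j.factorial)) :=
        tsum_congr fun j => by rw [rising_add]; ring
    _ = rising a i * (rising b i / rising c i) * (x ^ i / i.factorial) * (1 - y) ^ (-(a + i)) := by
        rw [tsum_mul_left, (hasSum_rising_mul_pow_div_factorial (a + i) hy).tsum_eq]
    _ = _ := by
        rw [neg_add, Complex.cpow_add _ _ hy_ne, Complex.cpow_neg _ (i : ℂ), Complex.cpow_natCast,
          div_pow]
        ring

lemma tsum_rising_add_mul_neg (a b : ℂ) {c x : ℂ} (hc : ∀ m : ℕ, c ≠ -m) (hx : ‖x‖ < 1 / 2) :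
    ∑' p : ℕ × ℕ, rising a (p.1 + p.2) * (rising (c - b) p.1 / rising c p.1) *
      ((-x) ^ p.1 / p.1.factorial * (x ^ p.2 / p.2.factorial)) = ₂F₁ a b c x := by
  have h_summable := summable_rising_add_mul a (c - b) c (x := -x) (y := x)
    (by rw [norm_neg]; linarith)
  rw [← (hasSum_ordinaryHypergeometric a b c (by linarith)).tsum_eq,
    tsum_prod_eq_tsum_sum_antidiagonal h_summable]
  refine tsum_congr fun n => ?_
  calc _ = ∑ p ∈ antidiagonal n, rising a n * x ^ n * ((-1) ^ p.1 *
        (rising (c - b) p.1 / rising c p.1) / (p.1.factorial * p.2.factorial)) := by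
        refine Finset.sum_congr rfl fun p hp => ?_
        rw [← mem_antidiagonal.1 hp, neg_pow, pow_add]
        ring
    _ = _ := by
        rw [← Finset.mul_sum, ← rising_div_rising_eq_sum_antidiagonal b hc]
        ring

lemma norm_neg_div_one_sub_lt_one_iff {x : ℂ} (hx : x ≠ 1) :
    ‖-x / (1 - x)‖ < 1 ↔ x.re < 1 / 2 := by
  rw [norm_div, norm_neg, div_lt_one (norm_pos_iff.2 (sub_ne_zero.2 hx.symm)),
    ← sq_lt_sq₀ (norm_nonneg _) (norm_nonneg _), Complex.sq_norm, Complex.sq_norm,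
    Complex.normSq_apply, Complex.normSq_apply]
  simp only [Complex.sub_re, Complex.sub_im, Complex.one_re, Complex.one_im]
  constructor <;> intro h <;> linarith

theorem ordinaryHypergeometric_pfaff (a b : ℂ) {c x : ℂ} (hc : ∀ m : ℕ, c ≠ -m) (hx : ‖x‖ < 1)
    (hx' : ‖-x / (1 - x)‖ < 1) :
    ₂F₁ a b c x = (1 - x) ^ (-a) * ₂F₁ a (c - b) c (-x / (1 - x)) := by
  let U : Set ℂ := Metric.ball 0 1 ∩ {z | z.re < 1 / 2}
  have hU_ne {z : ℂ} (hz : z ∈ U) : z ≠ 1 := by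
    rintro rfl
    simp [U] at hz
  have hU_open : IsOpen U :=
    Metric.isOpen_ball.inter (isOpen_lt Complex.continuous_re continuous_const)
  have hU_preconnected : IsPreconnected U :=
    ((convex_ball 0 1).inter (convex_halfSpace_re_lt _)).isPreconnected
  have h_left : DifferentiableOn ℂ (₂F₁ a b c : ℂ → ℂ) U :=
    (differentiableOn_ordinaryHypergeometric a b c).mono Set.inter_subset_left
  have h_right : DifferentiableOn ℂ
      (fun z : ℂ => (1 - z) ^ (-a) * ₂F₁ a (c - b) c (-z / (1 - z))) U := by
    refine DifferentiableOn.mul ?_ ?_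
    · refine DifferentiableOn.cpow_const (by fun_prop) fun z hz => Or.inl ?_
      have h_re : z.re < 1 / 2 := hz.2
      rw [Complex.sub_re, Complex.one_re]
      linarith
    · refine (differentiableOn_ordinaryHypergeometric a (c - b) c).comp
        (by fun_prop (disch := exact fun z hz => sub_ne_zero.2 (hU_ne hz).symm)) fun z hz => ?_
      exact mem_ball_zero_iff.2 ((norm_neg_div_one_sub_lt_one_iff (hU_ne hz)).2 hz.2)
  have h_near : ∀ᶠ z : ℂ in nhds 0,
      ₂F₁ a b c z = (1 - z) ^ (-a) * ₂F₁ a (c - b) c (-z / (1 - z)) := by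
    filter_upwards [Metric.ball_mem_nhds (0 : ℂ) one_half_pos] with z hz
    rw [mem_ball_zero_iff] at hz
    rw [← tsum_rising_add_mul_neg a b hc hz, tsum_rising_add_mul]
    rw [norm_neg]
    linarith
  refine (h_left.analyticOnNhd hU_open).eqOn_of_preconnected_of_eventuallyEq
    (h_right.analyticOnNhd hU_open) hU_preconnected (z₀ := 0) (by simp [U]) h_near ⟨?_, ?_⟩
  · exact mem_ball_zero_iff.2 hx
  · exact (norm_neg_div_one_sub_lt_one_iff fun h => by simp [h] at hx).1 hx'

end Pfaff

section Transformation

variable {ι : Type} [Fintype ι] [DecidableEq ι]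

lemma lauA_eq_tsum_mul_ordinaryHypergeometric (a : ℂ) (b c : ι → ℂ) {x : ι → ℂ} (k : ι)
    (hx : ∑ i, ‖x i‖ < 1) :
    lauA a b c x = ∑' m : {i // i ≠ k} → ℕ,
      lauATerm a (fun i : {i // i ≠ k} => b i) (fun i => c i) (fun i => x i) m *
        ₂F₁ (a + (∑ i, m i : ℕ)) (b k) (c k) (x k) := by
  let e : ({i // i ≠ k} → ℕ) × ℕ ≃ (ι → ℕ) :=
    (Equiv.prodComm _ _).trans (Equiv.funSplitAt k ℕ).symm
  have hxk : ‖x k‖ < 1 :=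
    (Finset.single_le_sum (fun i _ => norm_nonneg (x i)) (Finset.mem_univ k)).trans_lt hx
  have h_summable := e.summable_iff.2 (summable_lauATerm a b c hx)
  calc lauA a b c x = ∑' p, lauATerm a b c x (e p) := (e.tsum_eq _).symm
    _ = ∑' m, ∑' j, lauATerm a b c x (e (m, j)) := h_summable.tsum_prod
    _ = _ := tsum_congr fun m => ?_
  rw [← (hasSum_ordinaryHypergeometric _ _ _ hxk).tsum_eq, ← tsum_mul_left]
  refine tsum_congr fun j => ?_
  have h_at : e (m, j) k = j := by simp [e, Equiv.funSplitAt, Equiv.piSplitAt]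
  have h_off (i : {i // i ≠ k}) : e (m, j) i = m i := by
    simp [e, Equiv.funSplitAt, Equiv.piSplitAt, i.2]
  rw [lauATerm, Fintype.sum_eq_add_sum_subtype_ne _ k, Fintype.prod_eq_mul_prod_subtype_ne _ k,
    Fintype.prod_eq_mul_prod_subtype_ne _ k]
  simp only [lauATerm, h_at, h_off]
  rw [add_comm j, rising_add]
  ring

theorem lauA_euler_transformation_general (a : ℂ) (b : ι → ℂ) {c x : ι → ℂ} (k : ι)
    (hc : ∀ i, ∀ m : ℕ, c i ≠ -m) (hx : ∑ i, ‖x i‖ < 1)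
    (hx' : ∑ i, ‖Function.update (fun i => x i / (1 - x k)) k (-x k / (1 - x k)) i‖ < 1) :
    lauA a b c x = (1 - x k) ^ (-a) * lauA a (Function.update b k (c k - b k)) c
      (Function.update (fun i => x i / (1 - x k)) k (-x k / (1 - x k))) := by
  have hxk : ‖x k‖ < 1 :=
    (Finset.single_le_sum (fun i _ => norm_nonneg (x i)) (Finset.mem_univ k)).trans_lt hx
  have hxk' : ‖-x k / (1 - x k)‖ < 1 := by
    simpa using (Finset.single_le_sum (fun i _ => norm_nonneg _) (Finset.mem_univ k)).trans_lt hx'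
  have h_ne : 1 - x k ≠ 0 := sub_ne_zero.2 fun h => by simp [← h] at hxk
  rw [lauA_eq_tsum_mul_ordinaryHypergeometric a b c k hx,
    lauA_eq_tsum_mul_ordinaryHypergeometric a _ c k hx', ← tsum_mul_left]
  refine tsum_congr fun m => ?_
  have h_off (f : ι → ℂ) (z : ℂ) :
      (fun i : {i // i ≠ k} => Function.update f k z i) = fun i : {i // i ≠ k} => f i :=
    funext fun i => Function.update_of_ne i.2 _ _
  rw [h_off, h_off, lauATerm_div, Function.update_self, Function.update_self,
    ordinaryHypergeometric_pfaff _ _ (hc k) hxk hxk', neg_add, Complex.cpow_add _ _ h_ne,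
    Complex.cpow_neg _ ((∑ i, m i : ℕ) : ℂ), Complex.cpow_natCast]
  ring

end Transformation

theorem lauA_euler_transformation (n : ℕ) (a : ℂ) (b c x : Fin n → ℂ) (k : Fin n)
    (hbc : ∀ j, 0 < (b j).re ∧ (b j).re < (c j).re)
    (hxk : x k ≠ 1)
    (hconv : ∑ i, ‖x i‖ < 1)
    (hconv' : ∑ i, ‖Function.update (fun i => x i / (1 - x k)) k
        (-x k / (1 - x k)) i‖ < 1) :
    lauA a b c x =
      (1 - x k) ^ (-a) *
        lauA a (Function.update b k (c k - b k)) c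
          (Function.update (fun i => x i / (1 - x k)) k (-x k / (1 - x k))) :=
  lauA_euler_transformation_general a b k
    (fun i => ne_neg_natCast_of_re_pos ((hbc i).1.trans (hbc i).2)) hconv hconv'
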